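/- Every convex body K ⊆ ℝ² satisfies wcoin(K) ≥ 8, and wcoin([0,1]²) = 8; thus the affine square minimizes the weak covering index in the plane. -/

import Mathlib

open Set Pointwise

section Defs

variable {V : Type*} [NormedAddCommGroup V] [NormedSpace ℝ V]

/-- A convex body: compact, convex, with nonempty interior. -/
def IsConvexBody (K : Set V) : Prop :=
  IsCompact K ∧ Convex ℝ K ∧ (interior K).Nonempty

/-- `K` can be covered by `m` homothets of ratio `lam`. -/
def CoversWith (K : Set V) (lam : ℝ) (m : ℕ) : Prop :=
  ∃ t : Fin m → V, K ⊆ ⋃ i, (fun x => lam • x + t i) '' K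

/-- The `m`-covering number `γ_m(K)`. -/
noncomputable def gammaC (m : ℕ) (K : Set V) : ℝ :=
  sInf {lam : ℝ | 0 < lam ∧ CoversWith K lam m}

/-- The covering index `coin(K)`. -/
noncomputable def coin (K : Set V) : ℝ :=
  sInf {r : ℝ | ∃ m : ℕ, 0 < m ∧ gammaC m K ≤ 1 / 2 ∧ r = (m : ℝ) / (1 - gammaC m K)}

/-- The weak covering index `wcoin(K)`. -/
noncomputable def wcoin (K : Set V) : ℝ :=
  sInf {r : ℝ | ∃ m : ℕ, 0 < m ∧ gammaC m K < 1 ∧ r = (m : ℝ) / (1 - gammaC m K)}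

/-- `N_λ(K)`: the least number of translates of `λ • K` needed to cover `K`. -/
noncomputable def covN (lam : ℝ) (K : Set V) : ℕ :=
  sInf {n : ℕ | CoversWith K lam n}

/-- A convex body is tightly covered if for every `0 < λ < 1` it contains `N_λ(K)`
points no two of which lie in a common homothet `λ • K + t`. -/
def TightlyCovered (K : Set V) : Prop :=
  ∀ lam : ℝ, 0 < lam → lam < 1 →
    ∃ p : Fin (covN lam K) → V, (∀ i, p i ∈ K) ∧
      ∀ i j, i ≠ j → ∀ t : V,
        ¬(p i ∈ (fun x => lam • x + t) '' K ∧ p j ∈ (fun x => lam • x + t) '' K)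

/-- The covering parameter `C(K)` of Swanepoel. -/
noncomputable def covParam (K : Set V) : ℝ :=
  sInf {r : ℝ | ∃ k : ℕ, ∃ lam : Fin k → ℝ, ∃ t : Fin k → V,
    (∀ i, 0 < lam i ∧ lam i < 1) ∧
    (K ⊆ ⋃ i, (fun x => lam i • x + t i) '' K) ∧
    r = ∑ i, 1 / (1 - lam i)}

/-- The (multiplicative) Banach–Mazur distance. -/
noncomputable def distBM {d : ℕ} (K L : Set (Fin d → ℝ)) : ℝ :=
  sInf {δ : ℝ | 1 ≤ δ ∧ ∃ T : (Fin d → ℝ) ≃ₗ[ℝ] (Fin d → ℝ), ∃ a ∈ K, ∃ b ∈ L,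
    (fun x => x - b) '' L ⊆ T '' ((fun x => x - a) '' K) ∧
    T '' ((fun x => x - a) '' K) ⊆ δ • ((fun x => x - b) '' L)}

end Defs

/-!
A cover of a planar body `K` by `m` homothets of ratio `λ < 1` forces `8 (1 - λ) ≤ m`.

* The centers of the homotheties span the plane affinely, so `m ≥ 3`.
* If `m = 3`, take the point of `K` whose least barycentric coordinate with respect to the centers
  is as large as possible. It lies in the homothet centered at some vertex `j`; moving away from
  that vertex stays in `K` and increases every coordinate but the `j`-th, so the `j`-th is the least
  one, and it is at least `1 - λ`. Three coordinates of sum `1` are thus at least `1 - λ`.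
* If `m ≥ 4`, compare areas: `1 ≤ m λ²`.

Equality holds for the four half-size copies of a parallelogram at its corners.
-/

open MeasureTheory Module Topology

theorem exists_maximin_of_isCompact {X α ι : Type*} [TopologicalSpace X] [LinearOrder α]
    [TopologicalSpace α] [OrderClosedTopology α] [Finite ι] [Nonempty ι] {s : Set X}
    (hs : IsCompact s) (hne : s.Nonempty) {f : ι → X → α} (hf : ∀ i, ContinuousOn (f i) s) :
    ∃ p ∈ s, ∃ a, (∀ i, a ≤ f i p) ∧ ∀ r ∈ s, ∃ i, f i r ≤ a := by
  cases nonempty_fintype ι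
  obtain ⟨p, hp, hmax⟩ := hs.exists_isMaxOn hne
    (ContinuousOn.finset_inf'_apply Finset.univ_nonempty fun i _ ↦ hf i)
  refine ⟨p, hp, Finset.univ.inf' Finset.univ_nonempty fun i ↦ f i p,
    fun i ↦ Finset.inf'_le _ (Finset.mem_univ i), fun r hr ↦ ?_⟩
  obtain ⟨i, -, hi⟩ := Finset.exists_mem_eq_inf' Finset.univ_nonempty fun i ↦ f i r
  exact ⟨i, hi.ge.trans (hmax hr)⟩

section Homotheties

variable {k V ι : Type*} [CommRing k] [AddCommGroup V] [Module k V]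

theorem coord_homothety_self (b : AffineBasis ι k V) (j : ι) (r : k) (q : V) :
    b.coord j (AffineMap.homothety (b j) r q) = r * b.coord j q + (1 - r) := by
  rw [AffineMap.homothety_eq_lineMap, AffineMap.apply_lineMap, AffineMap.lineMap_apply_ring',
    b.coord_apply_eq]
  ring

theorem coord_homothety_of_ne (b : AffineBasis ι k V) {i j : ι} (hij : i ≠ j) (r : k) (q : V) :
    b.coord i (AffineMap.homothety (b j) r q) = r * b.coord i q := by
  rw [AffineMap.homothety_eq_lineMap, AffineMap.apply_lineMap, AffineMap.lineMap_apply_ring',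
    b.coord_apply_ne hij]
  ring

end Homotheties

theorem exists_mem_segment_forall_lt_coord {V ι : Type*} [AddCommGroup V] [Module ℝ V] [Finite ι]
    (b : AffineBasis ι ℝ V) {lam a : ℝ} (h0 : 0 < lam) (h1 : lam < 1) (ha : 0 < a) {j : ι} {q : V}
    (hle : ∀ i, a ≤ b.coord i (AffineMap.homothety (b j) lam q))
    (hlt : a < b.coord j (AffineMap.homothety (b j) lam q)) :
    ∃ r ∈ segment ℝ (AffineMap.homothety (b j) lam q) q, ∀ i, a < b.coord i r := by
  set p := AffineMap.homothety (b j) lam q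
  have hgrow : ∀ i ≠ j, b.coord i p < b.coord i q := fun i hij ↦ by
    have hpq : b.coord i p = lam * b.coord i q := coord_homothety_of_ne b hij lam q
    have := hle i
    nlinarith
  have hnear : ∀ᶠ s : ℝ in 𝓝[>] 0, a < b.coord j (AffineMap.lineMap p q s) := by
    simp only [AffineMap.apply_lineMap]
    refine (AffineMap.lineMap_continuous.tendsto' 0 _ ?_).mono_left nhdsWithin_le_nhds
      |>.eventually_const_lt hlt
    exact AffineMap.lineMap_apply_zero _ _
  obtain ⟨s, hs, hs0, hs1⟩ := (hnear.and (Ioo_mem_nhdsGT one_pos)).exists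
  refine ⟨AffineMap.lineMap p q s, ?_, fun i ↦ ?_⟩
  · rw [segment_eq_image_lineMap]
    exact mem_image_of_mem _ ⟨hs0.le, hs1.le⟩
  · obtain rfl | hij := eq_or_ne i j
    · exact hs
    · rw [AffineMap.apply_lineMap]
      exact (hle i).trans_lt ((left_lt_lineMap_iff_lt hs0).2 (hgrow i hij))

section NormedSpace

variable {V ι : Type*} [NormedAddCommGroup V] [NormedSpace ℝ V] {K : Set V} {lam : ℝ} {m : ℕ}

theorem CoversWith.exists_homothety_cover (h : CoversWith K lam m) (h1 : lam ≠ 1) :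
    ∃ c : Fin m → V, K ⊆ ⋃ i, AffineMap.homothety (c i) lam '' K := by
  obtain ⟨t, ht⟩ := h
  have hhomothety (i : Fin m) :
      (fun x ↦ lam • x + t i) = AffineMap.homothety ((1 - lam)⁻¹ • t i) lam := by
    funext x
    rw [AffineMap.homothety_eq_lineMap, AffineMap.lineMap_apply_module,
      smul_inv_smul₀ (sub_ne_zero.2 h1.symm), add_comm]
  exact ⟨fun i ↦ (1 - lam)⁻¹ • t i, by simpa only [hhomothety] using ht⟩

theorem CoversWith.of_fintype [Fintype ι] {t : ι → V}
    (h : K ⊆ ⋃ i, (fun x ↦ lam • x + t i) '' K) : CoversWith K lam (Fintype.card ι) :=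
  ⟨t ∘ (Fintype.equivFin ι).symm,
    h.trans_eq ((Fintype.equivFin ι).symm.surjective.iUnion_comp fun i ↦
      (fun x ↦ lam • x + t i) '' K).symm⟩

theorem coversWith_one (hm : 0 < m) : CoversWith K 1 m :=
  ⟨0, fun x hx ↦ mem_iUnion.2 ⟨⟨0, hm⟩, x, hx, by simp⟩⟩

theorem exists_coversWith (hK : IsCompact K) (hint : (interior K).Nonempty) (h0 : lam ≠ 0) :
    ∃ m : ℕ, 0 < m ∧ CoversWith K lam m := by
  obtain ⟨w, hw⟩ := hint
  have hopen (t : V) : IsOpen ((fun x ↦ lam • x + t) '' interior K) :=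
    ((isOpenMap_add_right t).comp (isOpenMap_smul₀ h0)) _ isOpen_interior
  obtain ⟨s, hs⟩ := hK.elim_finite_subcover _ hopen fun x _ ↦
    mem_iUnion.2 ⟨x - lam • w, w, hw, add_sub_cancel _ _⟩
  have hcover : K ⊆ ⋃ t : s, (fun x ↦ lam • x + (t : V)) '' K :=
    hs.trans <| iUnion₂_subset fun t ht ↦
      (image_mono interior_subset).trans (subset_iUnion_of_subset ⟨t, ht⟩ subset_rfl)
  refine ⟨_, ?_, CoversWith.of_fintype hcover⟩
  obtain ⟨t, -⟩ := mem_iUnion.1 (hcover (interior_subset hw))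
  exact Fintype.card_pos_iff.2 ⟨t⟩

theorem gammaC_le (h0 : 0 < lam) (h : CoversWith K lam m) : gammaC m K ≤ lam :=
  csInf_le ⟨0, fun _ h ↦ h.1.le⟩ ⟨h0, h⟩

theorem wcoin_le (hm : 0 < m) (h0 : 0 < lam) (h1 : lam < 1) (h : CoversWith K lam m) :
    wcoin K ≤ m / (1 - lam) := by
  have hγ : gammaC m K ≤ lam := gammaC_le h0 h
  have hbdd : BddBelow {r : ℝ | ∃ m : ℕ, 0 < m ∧ gammaC m K < 1 ∧ r = m / (1 - gammaC m K)} := by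
    refine ⟨0, ?_⟩
    rintro _ ⟨n, -, hn, rfl⟩
    exact div_nonneg n.cast_nonneg (sub_nonneg.2 hn.le)
  calc wcoin K ≤ m / (1 - gammaC m K) := csInf_le hbdd ⟨m, hm, hγ.trans_lt h1, rfl⟩
    _ ≤ m / (1 - lam) := by gcongr

theorem le_wcoin (hK : IsCompact K) (hint : (interior K).Nonempty) {a : ℝ} (ha : 0 < a)
    (h : ∀ (m : ℕ) (lam : ℝ), 0 < lam → CoversWith K lam m → a * (1 - lam) ≤ m) :
    a ≤ wcoin K := by
  refine le_csInf ?_ ?_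
  · obtain ⟨m, hm, hcov⟩ := exists_coversWith hK hint (one_half_pos (α := ℝ)).ne'
    exact ⟨_, m, hm, (gammaC_le one_half_pos hcov).trans_lt one_half_lt_one, rfl⟩
  · rintro _ ⟨m, hm, hγ, rfl⟩
    have hγ_ge : 1 - m / a ≤ gammaC m K := by
      refine le_csInf ⟨1, one_pos, coversWith_one hm⟩ fun lam ⟨h0, hcov⟩ ↦ ?_
      rw [sub_le_comm, le_div_iff₀' ha]
      exact h m lam h0 hcov
    rwa [le_div_iff₀ (sub_pos.2 hγ), ← le_div_iff₀' ha, sub_le_comm]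

theorem subset_convexHull_centers [Finite ι] {c : ι → V} (hK : IsCompact K) (h0 : 0 ≤ lam)
    (h1 : lam < 1) (hc : K ⊆ ⋃ i, AffineMap.homothety (c i) lam '' K) :
    K ⊆ convexHull ℝ (range c) := by
  intro x hx
  by_contra hxc
  obtain ⟨f, u, hfc, hfx⟩ := geometric_hahn_banach_closed_point (convex_convexHull ℝ (range c))
    ((finite_range c).isCompact_convexHull ℝ).isClosed hxc
  -- `f` is no larger at the preimage `q` of a maximum point, so it is no smaller at the center.
  obtain ⟨p, hp, hmax⟩ := hK.exists_isMaxOn ⟨x, hx⟩ f.continuous.continuousOn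
  obtain ⟨i, q, hq, rfl⟩ := mem_iUnion.1 (hc hp)
  have hfp : f (AffineMap.homothety (c i) lam q) = (1 - lam) * f (c i) + lam * f q := by
    simp [AffineMap.homothety_eq_lineMap, AffineMap.lineMap_apply_module]
  have hfq : f q ≤ f (AffineMap.homothety (c i) lam q) := hmax hq
  have hux : f x ≤ f (AffineMap.homothety (c i) lam q) := hmax hx
  have hfci : f (c i) < u := hfc _ (subset_convexHull ℝ _ (mem_range_self i))
  nlinarith

section FiniteDimensional

variable [FiniteDimensional ℝ V]

theorem affineSpan_centers_eq_top [Finite ι] {c : ι → V} (hK : IsCompact K)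
    (hint : (interior K).Nonempty) (h0 : 0 ≤ lam) (h1 : lam < 1)
    (hc : K ⊆ ⋃ i, AffineMap.homothety (c i) lam '' K) : affineSpan ℝ (range c) = ⊤ :=
  interior_convexHull_nonempty_iff_affineSpan_eq_top.1
    (hint.mono (interior_mono (subset_convexHull_centers hK h0 h1 hc)))

theorem CoversWith.finrank_lt (h : CoversWith K lam m) (hK : IsCompact K)
    (hint : (interior K).Nonempty) (h0 : 0 ≤ lam) (h1 : lam < 1) : finrank ℝ V < m := by
  obtain ⟨c, hc⟩ := h.exists_homothety_cover h1.ne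
  obtain ⟨s, hsc, b, -⟩ :=
    AffineBasis.exists_affine_subbasis (affineSpan_centers_eq_top hK hint h0 h1 hc)
  have : Fintype s := ((finite_range c).subset hsc).fintype
  calc finrank ℝ V < Fintype.card s := by rw [b.card_eq_finrank_add_one]; exact Nat.lt_succ_self _
    _ = s.ncard := by rw [← Nat.card_eq_fintype_card, Nat.card_coe_set_eq]
    _ ≤ (range c).ncard := ncard_le_ncard hsc
    _ ≤ m := by simpa [← image_univ] using ncard_image_le (f := c) (s := univ)

theorem exists_mem_forall_one_sub_le_coord [Finite ι] (b : AffineBasis ι ℝ V)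
    (hK : IsConvexBody K) (h0 : 0 < lam) (h1 : lam < 1)
    (hcov : K ⊆ ⋃ i, AffineMap.homothety (b i) lam '' K) :
    ∃ p ∈ K, ∀ i, 1 - lam ≤ b.coord i p := by
  obtain ⟨hcomp, hconv, w, hw⟩ := hK
  have := b.nonempty
  have hsub : K ⊆ convexHull ℝ (range b) := subset_convexHull_centers hcomp h0.le h1 hcov
  have hw_pos : ∀ i, 0 < b.coord i w := by
    have hw' : w ∈ interior (convexHull ℝ (range b)) := interior_mono hsub hw
    rwa [b.interior_convexHull] at hw'
  obtain ⟨p, hp, a, hap, hmax⟩ := exists_maximin_of_isCompact hcomp ⟨w, interior_subset hw⟩ fun i ↦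
    (b.coord i).continuous_of_finiteDimensional.continuousOn
  have ha : 0 < a := by
    obtain ⟨i, hi⟩ := hmax w (interior_subset hw)
    exact (hw_pos i).trans_le hi
  obtain ⟨j, q, hq, rfl⟩ := mem_iUnion.1 (hcov hp)
  have hja : b.coord j (AffineMap.homothety (b j) lam q) ≤ a := by
    by_contra! hlt
    obtain ⟨r, hr, hr_lt⟩ := exists_mem_segment_forall_lt_coord b h0 h1 ha hap hlt
    obtain ⟨i, hi⟩ := hmax r (hconv.segment_subset hp hq hr)
    exact (hr_lt i).not_ge hi
  have hq_nonneg : 0 ≤ b.coord j q := by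
    have hq' := hsub hq
    rw [b.convexHull_eq_nonneg_coord] at hq'
    exact hq' j
  refine ⟨_, hp, fun i ↦ ?_⟩
  calc 1 - lam ≤ lam * b.coord j q + (1 - lam) := le_add_of_nonneg_left (by positivity)
    _ = b.coord j (AffineMap.homothety (b j) lam q) := (coord_homothety_self b j lam q).symm
    _ ≤ b.coord i (AffineMap.homothety (b j) lam q) := hja.trans (hap i)

theorem CoversWith.succ_finrank_mul_one_sub_le_one (h : CoversWith K lam (finrank ℝ V + 1))
    (hK : IsConvexBody K) (h0 : 0 < lam) : (finrank ℝ V + 1) * (1 - lam) ≤ 1 := by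
  obtain h1 | h1 := le_or_gt 1 lam
  · nlinarith
  obtain ⟨c, hc⟩ := h.exists_homothety_cover h1.ne
  have htop : affineSpan ℝ (range c) = ⊤ := affineSpan_centers_eq_top hK.1 hK.2.2 h0.le h1 hc
  have hind : AffineIndependent ℝ c := by
    rw [affineIndependent_iff_finrank_vectorSpan_eq ℝ c (Fintype.card_fin _),
      ← direction_affineSpan, htop, AffineSubspace.direction_top, finrank_top]
  let b : AffineBasis (Fin (finrank ℝ V + 1)) ℝ V := ⟨c, hind, htop⟩
  obtain ⟨p, -, hp⟩ := exists_mem_forall_one_sub_le_coord b hK h0 h1 hc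
  calc (finrank ℝ V + 1) * (1 - lam) = ∑ _i : Fin (finrank ℝ V + 1), (1 - lam) := by simp [mul_sub]
    _ ≤ ∑ i, b.coord i p := Finset.sum_le_sum fun i _ ↦ hp i
    _ = 1 := b.sum_coord_apply_eq_one p

theorem CoversWith.one_le_mul_pow_finrank (h : CoversWith K lam m) (hK : IsCompact K)
    (hint : (interior K).Nonempty) (h0 : 0 ≤ lam) : 1 ≤ m * lam ^ finrank ℝ V := by
  borelize V
  let μ : Measure V := Measure.addHaar
  obtain ⟨t, ht⟩ := h
  have htranslate (i : Fin m) :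
      μ.real ((fun x ↦ lam • x + t i) '' K) = lam ^ finrank ℝ V * μ.real K := by
    have himage : (fun x ↦ lam • x + t i) '' K = (· + t i) '' (lam • K) := by
      rw [← image_smul, image_image]
    rw [measureReal_def, himage, image_add_right, measure_preimage_add_right,
      Measure.addHaar_smul, abs_of_nonneg (by positivity), ENNReal.toReal_mul,
      ENNReal.toReal_ofReal (by positivity), measureReal_def]
  have hfinite : μ (⋃ i, (fun x ↦ lam • x + t i) '' K) ≠ ⊤ :=
    (isCompact_iUnion fun i ↦ hK.image (by fun_prop)).measure_ne_top
  have hpos : 0 < μ.real K :=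
    ENNReal.toReal_pos (Measure.measure_pos_of_nonempty_interior μ hint).ne' hK.measure_ne_top
  refine le_of_mul_le_mul_right ?_ hpos
  calc 1 * μ.real K ≤ μ.real (⋃ i, (fun x ↦ lam • x + t i) '' K) := by
        rw [one_mul]; exact measureReal_mono ht hfinite
    _ ≤ ∑ i, μ.real ((fun x ↦ lam • x + t i) '' K) := measureReal_iUnion_fintype_le _
    _ = m * lam ^ finrank ℝ V * μ.real K := by simp [htranslate, mul_assoc]

end FiniteDimensional

theorem CoversWith.eight_mul_one_sub_le (h : CoversWith K lam m) (hV : finrank ℝ V = 2)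
    (hK : IsConvexBody K) (h0 : 0 < lam) : 8 * (1 - lam) ≤ m := by
  have := FiniteDimensional.of_finrank_pos (hV.symm ▸ two_pos)
  obtain h1 | h1 := le_or_gt 1 lam
  · linarith [m.cast_nonneg (α := ℝ)]
  have hm_gt : 2 < m := hV ▸ h.finrank_lt hK.1 hK.2.2 h0.le h1
  obtain rfl | hm4 : m = 3 ∨ 4 ≤ m := by omega
  · have hthree := CoversWith.succ_finrank_mul_one_sub_le_one (hV.symm ▸ h) hK h0
    rw [hV] at hthree
    push_cast at hthree ⊢
    linarith
  have hm4' : (4 : ℝ) ≤ m := by exact_mod_cast hm4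
  obtain hlam | hlam := le_or_gt (1 / 2) lam
  · linarith
  have harea : 1 ≤ m * lam ^ 2 := hV ▸ h.one_le_mul_pow_finrank hK.1 hK.2.2 h0.le
  have hcubic : 8 * (1 - lam) * lam ^ 2 ≤ 1 := by
    have hfactor : 0 ≤ (1 - 2 * lam) * (1 + 2 * lam * (1 - 2 * lam)) := by
      have : 0 ≤ 1 - 2 * lam := by linarith
      positivity
    linarith
  exact le_of_mul_le_mul_right (hcubic.trans harea) (by positivity)

theorem IsConvexBody.eight_le_wcoin (hK : IsConvexBody K) (hV : finrank ℝ V = 2) : 8 ≤ wcoin K :=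
  le_wcoin hK.1 hK.2.2 (by norm_num) fun _ _ h0 h ↦ h.eight_mul_one_sub_le hV hK h0

section Parallelepiped

variable [Fintype ι]

theorem isConvexBody_parallelepiped (b : Basis ι ℝ V) : IsConvexBody (parallelepiped b) :=
  ⟨b.parallelepiped.isCompact, convex_parallelepiped b, b.parallelepiped.interior_nonempty⟩

theorem coversWith_parallelepiped (v : ι → V) :
    CoversWith (parallelepiped v) (1 / 2) (2 ^ Fintype.card ι) := by
  classical
  rw [← Fintype.card_finset]
  refine CoversWith.of_fintype (t := fun s ↦ ∑ i ∈ s, (1 / 2 : ℝ) • v i) fun x hx ↦ ?_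
  obtain ⟨a, ⟨ha0, ha1⟩, rfl⟩ := (mem_parallelepiped_iff v x).1 hx
  let s : Finset ι := {i | 1 / 2 < a i}
  refine mem_iUnion.2 ⟨s, ∑ i, (2 * a i - if i ∈ s then 1 else 0) • v i,
    (mem_parallelepiped_iff v _).2 ⟨_, ⟨fun i ↦ ?_, fun i ↦ ?_⟩, rfl⟩, ?_⟩
  · have := ha0 i
    simp only [s, Finset.mem_filter_univ, Pi.zero_apply] at this ⊢
    split_ifs <;> linarith
  · have := ha1 i
    simp only [s, Finset.mem_filter_univ, Pi.one_apply] at this ⊢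
    split_ifs <;> linarith
  · rw [← Finset.sum_ite_mem_eq s]
    simp only [Finset.smul_sum, ← Finset.sum_add_distrib]
    refine Finset.sum_congr rfl fun i _ ↦ ?_
    split_ifs <;> module

theorem wcoin_parallelepiped_le (v : ι → V) :
    wcoin (parallelepiped v) ≤ 2 ^ (Fintype.card ι + 1) := by
  refine (wcoin_le (by positivity) one_half_pos one_half_lt_one
    (coversWith_parallelepiped v)).trans_eq ?_
  push_cast
  ring

end Parallelepiped

theorem wcoin_square_min_general (hV : finrank ℝ V = 2) :
    (∀ K : Set V, IsConvexBody K → 8 ≤ wcoin K) ∧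
    ∀ b : Basis (Fin 2) ℝ V, wcoin (parallelepiped b) = 8 :=
  ⟨fun _ hK ↦ hK.eight_le_wcoin hV, fun b ↦ le_antisymm
    ((wcoin_parallelepiped_le b).trans_eq (by norm_num))
    ((isConvexBody_parallelepiped b).eight_le_wcoin hV)⟩

end NormedSpace

/-- the affine square minimizes the weak covering index in the plane. -/
theorem wcoin_square_min :
    (∀ K : Set (Fin 2 → ℝ), IsConvexBody K → 8 ≤ wcoin K) ∧
    wcoin (Set.Icc (0 : Fin 2 → ℝ) 1) = 8 := by
  have hsquare : parallelepiped (Pi.basisFun ℝ (Fin 2)) = Icc 0 1 :=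
    (congrArg SetLike.coe (Basis.parallelepiped_basisFun (Fin 2))).trans (pi_univ_Icc 0 1)
  exact (wcoin_square_min_general (finrank_fin_fun ℝ)).imp_right fun h ↦
    hsquare ▸ h (Pi.basisFun ℝ (Fin 2))
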